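/- arXiv:1903.04351 — 2 statements merged into one kernel-verified Lean document; each statement's English description precedes it below -/
import Mathlib

section
/- For every ε ∈ (0,1) and every finite set X ⊂ ℝ of n points and every p ∈ {1,…,n}, there exists a finite multiset D of points in ℝ (a finite set with positive integer multiplicities) whose number of distinct points is at most K/ε for a universal constant K, whose total multiplicity is n, and such that for every center y ∈ ℝ: |cost_p(D,{y}) − cost_p(X,{y})| ≤ ε·opt, where opt := min_{y*∈ℝ} cost_p(X,{y*}). In particular, since cost_p(X,{y}) ≥ opt for all y, D is an ε-coreset: cost_p(D,{y}) ∈ [(1−ε)·cost_p(X,{y}), (1+ε)·cost_p(X,{y})] for every y ∈ ℝ. -/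
/-- `topP p s` is the sum of the `p` largest entries of the multiset `s` of reals. -/
noncomputable def topP (p : ℕ) (s : Multiset ℝ) : ℝ :=
  (((s.sort (· ≤ ·)).reverse).take p).sum

/-- The p-Centrum objective with one facility `y ∈ ℝ`: the sum of the `p` largest
distances `|x - y|` over the points of the multiset `s`, counted with multiplicity. -/
noncomputable def cost1 (p : ℕ) (s : Multiset ℝ) (y : ℝ) : ℝ :=
  topP p (s.map fun x => |x - y|)

/-!
By linear programming duality the sum of the `p` largest entries of `s` is the minimum over `τ ≥ 0`
of `p * τ + ∑ v ∈ s, (v - τ)⁺`, attained at the `p`-th largest entry. For distances to `y`, the sum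
of the `(|x - y| - τ)⁺` is a combination of `∑ (x - c)⁺` at `c = y + τ` and `c = y - τ`, of the
number of points and of their sum. Cut the sorted points into consecutive buckets and move every
point to the mean of its bucket. Number and sum are unchanged, `∑ (x - c)⁺` does not increase
(Jensen), and only the bucket with `c` in its interior contributes to its decrease, by at most its
total absolute deviation from the mean. So the cost decreases by at most twice the largest deviation
of a bucket.

The `p` leftmost and the `p` rightmost points are bucketed greedily, up to deviation `ε * opt / 2`.
Each of these two groups has total distance at most the cost to any center, so `O(1 / ε)` buckets
suffice. All points in between form one more bucket. Its deviation may be large, but it lies between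
`y - τ` and `y + τ`, so it contributes no error.
-/

open Multiset

/-- The total amount by which the entries of `s` exceed the level `c`. -/
noncomputable def excess (s : Multiset ℝ) (c : ℝ) : ℝ :=
  (s.map fun x => max (x - c) 0).sum

section Excess

variable {s t : Multiset ℝ} {c : ℝ}

@[simp]
theorem excess_cons (a : ℝ) (s : Multiset ℝ) (c : ℝ) :
    excess (a ::ₘ s) c = max (a - c) 0 + excess s c := by
  simp [excess]

@[simp]
theorem excess_zero (c : ℝ) : excess 0 c = 0 := by
  simp [excess]

@[simp]
theorem excess_add (s t : Multiset ℝ) (c : ℝ) :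
    excess (s + t) c = excess s c + excess t c := by
  simp [excess]

@[simp]
theorem excess_replicate (n : ℕ) (a c : ℝ) : excess (replicate n a) c = n * max (a - c) 0 := by
  simp [excess]

theorem excess_nonneg (s : Multiset ℝ) (c : ℝ) : 0 ≤ excess s c :=
  sum_nonneg fun v hv => by
    obtain ⟨x, -, rfl⟩ := mem_map.mp hv
    exact le_max_right _ _

theorem excess_mono (h : t ≤ s) (c : ℝ) : excess t c ≤ excess s c := by
  obtain ⟨u, rfl⟩ := Multiset.le_iff_exists_add.mp h
  simpa using excess_nonneg u c

theorem excess_eq_zero (h : ∀ x ∈ s, x ≤ c) : excess s c = 0 :=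
  sum_eq_zero fun v hv => by
    obtain ⟨x, hx, rfl⟩ := mem_map.mp hv
    exact max_eq_right (sub_nonpos.mpr (h x hx))

theorem sum_map_sub_const (s : Multiset ℝ) (c : ℝ) :
    (s.map fun x => x - c).sum = s.sum - card s * c := by
  simp [sum_map_sub]

theorem excess_eq_sum_sub (h : ∀ x ∈ s, c ≤ x) : excess s c = s.sum - card s * c := by
  rw [← sum_map_sub_const, excess, map_congr rfl fun x hx => max_eq_left (sub_nonneg.mpr (h x hx))]

theorem sum_sub_le_excess (s : Multiset ℝ) (c : ℝ) : s.sum - card s * c ≤ excess s c := by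
  rw [← sum_map_sub_const]
  exact sum_map_le_sum_map _ _ fun _ _ => le_max_left _ _

theorem excess_map_abs_sub (s : Multiset ℝ) (y : ℝ) {τ : ℝ} (hτ : 0 ≤ τ) :
    excess (s.map fun x => |x - y|) τ =
      excess s (y + τ) + excess s (y - τ) - (s.sum - card s * (y - τ)) := by
  have pointwise (x : ℝ) :
      max (|x - y| - τ) 0 = max (x - (y + τ)) 0 + max (x - (y - τ)) 0 - (x - (y - τ)) := by
    grind
  rw [← sum_map_sub_const]
  simp only [excess, map_map, Function.comp_def, pointwise, sum_map_sub, sum_map_add]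

end Excess

section TopP

variable {s t : Multiset ℝ} {p : ℕ} {τ : ℝ}

theorem sum_le_mul_add_excess (hts : t ≤ s) (ht : card t ≤ p) (hτ : 0 ≤ τ) :
    t.sum ≤ p * τ + excess s τ := by
  have hpτ : (card t : ℝ) * τ ≤ p * τ := by gcongr
  linarith [sum_sub_le_excess t τ, excess_mono hts τ]

theorem topP_le_mul_add_excess (p : ℕ) (s : Multiset ℝ) (hτ : 0 ≤ τ) :
    topP p s ≤ p * τ + excess s τ := by
  rw [topP, ← sum_coe]
  refine sum_le_mul_add_excess ?_ (by simp) hτ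
  calc ((s.sort.reverse.take p : List ℝ) : Multiset ℝ) ≤ (s.sort.reverse : Multiset ℝ) :=
        coe_le.mpr (List.take_sublist _ _).subperm
    _ = s := by rw [coe_reverse, sort_eq]

theorem exists_topP_eq_mul_add_excess (hp₁ : 1 ≤ p) (hp : p ≤ card s) :
    ∃ τ ∈ s, topP p s = p * τ + excess s τ ∧ s.countP (τ < ·) < p := by
  obtain ⟨u, τ, w, hsort, hu⟩ :
      ∃ u τ w, (s.sort (· ≤ ·)).reverse = u ++ τ :: w ∧ u.length + 1 = p := by
    have hlt : p - 1 < (s.sort (· ≤ ·)).reverse.length := by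
      rw [List.length_reverse, length_sort]
      omega
    refine ⟨_, _, _, (List.take_append_drop (p - 1) _).symm.trans
      (congrArg _ (List.drop_eq_getElem_cons hlt)), ?_⟩
    simp only [List.length_take, List.length_reverse, length_sort]
    omega
  have hs : s = u + τ ::ₘ w := by
    rw [← sort_eq s (· ≤ ·), ← coe_reverse, hsort, cons_coe, coe_add]
  have hsorted : (u ++ τ :: w).Pairwise (· ≥ ·) := by
    rw [← hsort, List.pairwise_reverse]
    exact pairwise_sort s _
  have hu_ge : ∀ v ∈ u, τ ≤ v := fun v hv =>
    (List.pairwise_append.mp hsorted).2.2 v hv τ List.mem_cons_self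
  have hw_le : ∀ v ∈ w, v ≤ τ := (List.pairwise_cons.mp (List.pairwise_append.mp hsorted).2.1).1
  refine ⟨τ, by simp [hs], ?_, ?_⟩
  · have htop : topP p s = u.sum + τ := by
      simp [topP, hsort, ← hu, List.take_append, List.take_of_length_le]
    rw [htop, hs, excess_add, excess_cons, excess_eq_zero (s := (w : Multiset ℝ)) hw_le,
      excess_eq_sum_sub (s := (u : Multiset ℝ)) hu_ge, ← hu, sub_self, max_self, sum_coe, coe_card]
    push_cast
    ring
  · have hw_count : countP (τ < ·) (w : Multiset ℝ) = 0 :=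
      countP_eq_zero.mpr fun v hv => (hw_le v hv).not_gt
    have hu_count := countP_le_card (τ < ·) (u : Multiset ℝ)
    rw [coe_card] at hu_count
    rw [hs, countP_add, countP_cons_of_neg _ (lt_irrefl τ), hw_count]
    omega

theorem sum_le_topP (hs : ∀ v ∈ s, 0 ≤ v) (hp₁ : 1 ≤ p) (hp : p ≤ card s) (hts : t ≤ s)
    (ht : card t ≤ p) : t.sum ≤ topP p s := by
  obtain ⟨τ, hτ, heq, -⟩ := exists_topP_eq_mul_add_excess hp₁ hp
  exact heq ▸ sum_le_mul_add_excess hts ht (hs τ hτ)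

end TopP

section Cost

variable {X Y : Multiset ℝ} {p : ℕ} {y : ℝ}

theorem sum_abs_sub_le_cost1 (hp₁ : 1 ≤ p) (hp : p ≤ card X) (hYX : Y ≤ X) (hY : card Y ≤ p)
    (y : ℝ) : (Y.map fun x => |x - y|).sum ≤ cost1 p X y :=
  sum_le_topP (by simp) hp₁ (by simpa using hp) (map_le_map hYX) (by simpa using hY)

theorem cost1_nonneg (hp₁ : 1 ≤ p) (hp : p ≤ card X) (y : ℝ) : 0 ≤ cost1 p X y := by
  simpa using sum_abs_sub_le_cost1 hp₁ hp (zero_le X) (by simp) y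

theorem iInf_cost1_le (hp₁ : 1 ≤ p) (hp : p ≤ card X) (y : ℝ) :
    ⨅ y', cost1 p X y' ≤ cost1 p X y :=
  ciInf_le ⟨0, Set.forall_mem_range.mpr (cost1_nonneg hp₁ hp)⟩ y

theorem cost1_le_cost1_add (hp₁ : 1 ≤ p) (hp : p ≤ card X) (hcard : card Y = card X)
    (hsum : Y.sum = X.sum) {t : ℝ}
    (hexcess : ∀ τ, X.countP (fun x => τ < |x - y|) < p →
      excess Y (y + τ) ≤ excess X (y + τ) + t ∧ excess Y (y - τ) ≤ excess X (y - τ) + t) :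
    cost1 p Y y ≤ cost1 p X y + 2 * t := by
  obtain ⟨τ, hτ, heq, hcount⟩ := exists_topP_eq_mul_add_excess
    (s := X.map fun x => |x - y|) hp₁ (by simpa using hp)
  have hτ₀ : 0 ≤ τ := by
    obtain ⟨x, -, rfl⟩ := mem_map.mp hτ
    exact abs_nonneg _
  rw [countP_map, ← countP_eq_card_filter] at hcount
  obtain ⟨hright, hleft⟩ := hexcess τ hcount
  have hdual := topP_le_mul_add_excess p (Y.map fun x => |x - y|) hτ₀
  rw [excess_map_abs_sub _ _ hτ₀] at heq hdual
  rw [hcard, hsum] at hdual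
  rw [cost1, cost1]
  linarith

end Cost

section Mean

variable {s : Multiset ℝ}

/-- The arithmetic mean of `s`; it is `0` for the empty multiset. -/
noncomputable def mean (s : Multiset ℝ) : ℝ :=
  s.sum / card s

/-- The total (not averaged) absolute deviation of `s` from its mean. -/
noncomputable def deviation (s : Multiset ℝ) : ℝ :=
  (s.map fun x => |x - mean s|).sum

/-- The multiset obtained from `s` by moving all its points to their mean. -/
noncomputable def concentrate (s : Multiset ℝ) : Multiset ℝ :=
  replicate (card s) (mean s)

@[simp]
theorem card_mul_mean (s : Multiset ℝ) : card s * mean s = s.sum := by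
  rcases eq_or_ne s 0 with rfl | hs
  · simp
  · exact mul_div_cancel₀ _ (by simpa using hs)

@[simp]
theorem card_concentrate (s : Multiset ℝ) : card (concentrate s) = card s :=
  card_replicate _ _

@[simp]
theorem sum_concentrate (s : Multiset ℝ) : (concentrate s).sum = s.sum := by
  simp [concentrate]

theorem mean_mem_of_convex {S : Set ℝ} (hS : Convex ℝ S) (hs : s ≠ 0) (h : ∀ x ∈ s, x ∈ S) :
    mean s ∈ S := by
  induction s using Quotient.inductionOn with
  | h l =>
    have hl : (l.length : ℝ) ≠ 0 := by simpa using hs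
    have hmean : mean l = ∑ i : Fin l.length, (l.length : ℝ)⁻¹ • l[i.val] := by
      rw [← Finset.smul_sum, Fin.sum_univ_getElem l, smul_eq_mul, mean, sum_coe, coe_card,
        div_eq_inv_mul]
    exact hmean ▸ hS.sum_mem (fun _ _ => by positivity) (by simp [hl]) fun i _ =>
      h _ (List.getElem_mem i.isLt)

theorem forall_mem_concentrate_of_convex {S : Set ℝ} (hS : Convex ℝ S) (h : ∀ x ∈ s, x ∈ S) :
    ∀ x ∈ concentrate s, x ∈ S := by
  intro x hx
  obtain ⟨hs, rfl⟩ := mem_replicate.mp hx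
  exact mean_mem_of_convex hS (by rwa [ne_eq, ← card_eq_zero]) h

theorem deviation_zero : deviation 0 = 0 := by
  simp [deviation]

theorem deviation_singleton (a : ℝ) : deviation {a} = 0 := by
  simp [deviation, mean]

theorem deviation_le (s : Multiset ℝ) (c : ℝ) :
    deviation s ≤ 2 * (s.map fun x => |x - c|).sum := by
  have hmean : card s * |c - mean s| ≤ (s.map fun x => |x - c|).sum := by
    calc card s * |c - mean s| = |(s.map fun x => x - c).sum| := by
          rw [sum_map_sub_const, ← card_mul_mean, ← mul_sub, abs_mul, Nat.abs_cast, abs_sub_comm]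
      _ ≤ (s.map fun x => |x - c|).sum := by
          simpa [map_map, Function.comp_def] using abs_sum_le_sum_abs (s := s.map fun x => x - c)
  have htri : deviation s ≤ (s.map fun x => |x - c| + |c - mean s|).sum :=
    sum_map_le_sum_map _ _ fun x _ => abs_sub_le x c (mean s)
  rw [sum_map_add, map_const', sum_replicate, nsmul_eq_mul] at htri
  linarith

theorem excess_concentrate_le (s : Multiset ℝ) (c : ℝ) : excess (concentrate s) c ≤ excess s c := by
  rw [concentrate, excess_replicate, mul_max_of_nonneg _ _ (Nat.cast_nonneg _), mul_sub,
    card_mul_mean, mul_zero]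
  exact max_le (sum_sub_le_excess s c) (excess_nonneg s c)

theorem excess_le_excess_concentrate_add_deviation (s : Multiset ℝ) (c : ℝ) :
    excess s c ≤ excess (concentrate s) c + deviation s := by
  calc excess s c ≤ (s.map fun x => max (mean s - c) 0 + |x - mean s|).sum :=
        sum_map_le_sum_map _ _ fun x _ => by grind
    _ = excess (concentrate s) c + deviation s := by
        rw [sum_map_add, map_const', sum_replicate, nsmul_eq_mul, concentrate, excess_replicate,
          deviation]

end Mean

/-- The multiset obtained by moving the points of each bucket to their mean. -/
noncomputable def coarsen (Bs : List (List ℝ)) : Multiset ℝ :=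
  (Bs.map fun B => concentrate B).sum

section Coarsen

variable {Bs : List (List ℝ)} {c t : ℝ}

@[simp]
theorem coarsen_nil : coarsen [] = 0 :=
  rfl

@[simp]
theorem coarsen_cons (B : List ℝ) (Bs : List (List ℝ)) :
    coarsen (B :: Bs) = concentrate B + coarsen Bs := by
  simp [coarsen]

@[simp]
theorem coarsen_append (Bs Cs : List (List ℝ)) :
    coarsen (Bs ++ Cs) = coarsen Bs + coarsen Cs := by
  simp [coarsen]

@[simp]
theorem card_coarsen (Bs : List (List ℝ)) : card (coarsen Bs) = Bs.flatten.length := by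
  induction Bs with
  | nil => rfl
  | cons B Bs ih => simp [ih]

@[simp]
theorem sum_coarsen (Bs : List (List ℝ)) : (coarsen Bs).sum = Bs.flatten.sum := by
  induction Bs with
  | nil => rfl
  | cons B Bs ih => simp [ih]

theorem card_toFinset_coarsen_le (Bs : List (List ℝ)) :
    (coarsen Bs).toFinset.card ≤ Bs.length := by
  induction Bs with
  | nil => rfl
  | cons B Bs ih =>
    have hconcentrate : (concentrate B).toFinset.card ≤ 1 :=
      Finset.card_le_one_iff.mpr fun hx hy => by
        rw [mem_toFinset] at hx hy
        rw [eq_of_mem_replicate hx, eq_of_mem_replicate hy]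
    rw [coarsen_cons, toFinset_add, List.length_cons]
    have hunion := Finset.card_union_le (concentrate B).toFinset (coarsen Bs).toFinset
    omega

theorem forall_mem_coarsen_of_convex {S : Set ℝ} (hS : Convex ℝ S) (h : ∀ x ∈ Bs.flatten, x ∈ S) :
    ∀ x ∈ coarsen Bs, x ∈ S := by
  induction Bs with
  | nil => simp
  | cons B Bs ih =>
    rw [List.flatten_cons, List.forall_mem_append] at h
    intro x hx
    rw [coarsen_cons, mem_add] at hx
    exact hx.elim (forall_mem_concentrate_of_convex hS h.1 x) (ih h.2 x)

theorem length_flatten_le_countP_coarsen {S : Set ℝ} (hS : Convex ℝ S) {q : ℝ → Prop}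
    [DecidablePred q] (hSq : ∀ x ∈ S, q x) (h : ∀ x ∈ Bs.flatten, x ∈ S) :
    Bs.flatten.length ≤ (coarsen Bs).countP q := by
  rw [← card_coarsen, countP_eq_card.mpr fun x hx => hSq x (forall_mem_coarsen_of_convex hS h x hx)]

theorem excess_coarsen_le (Bs : List (List ℝ)) (c : ℝ) :
    excess (coarsen Bs) c ≤ excess Bs.flatten c := by
  induction Bs with
  | nil => rfl
  | cons B Bs ih =>
    rw [coarsen_cons, List.flatten_cons, ← coe_add, excess_add, excess_add]
    exact add_le_add (excess_concentrate_le B c) ih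

theorem excess_le_excess_coarsen (h : ∀ x ∈ Bs.flatten, c ≤ x) :
    excess Bs.flatten c ≤ excess (coarsen Bs) c := by
  calc excess Bs.flatten c = (coarsen Bs).sum - card (coarsen Bs) * c := by
        rw [excess_eq_sum_sub (s := (Bs.flatten : Multiset ℝ)) h, sum_coe, sum_coarsen,
          card_coarsen, coe_card]
    _ ≤ excess (coarsen Bs) c := sum_sub_le_excess _ _

-- The errors of the buckets do not add up: at most one bucket has points on both sides of `c`.
theorem excess_flatten_le_excess_coarsen_add (hsorted : Bs.flatten.Pairwise (· ≤ ·)) (ht : 0 ≤ t)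
    (h : ∀ B ∈ Bs, excess B c ≤ excess (concentrate B) c + t) :
    excess Bs.flatten c ≤ excess (coarsen Bs) c + t := by
  induction Bs with
  | nil => simpa using ht
  | cons B Bs ih =>
    obtain ⟨-, hsorted_tail, hcross⟩ := List.pairwise_append.mp hsorted
    rw [List.forall_mem_cons] at h
    rw [coarsen_cons, List.flatten_cons, ← coe_add, excess_add, excess_add]
    by_cases hB : ∀ x ∈ B, x ≤ c
    · have hhead := excess_eq_zero (s := (B : Multiset ℝ)) hB
      linarith [excess_nonneg (concentrate B) c, ih hsorted_tail h.2]
    · push Not at hB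
      obtain ⟨x, hx, hcx⟩ := hB
      have htail := excess_le_excess_coarsen fun z hz => hcx.le.trans (hcross x hx z hz)
      linarith [h.1]

end Coarsen

section Buckets

variable {l M : List ℝ} {t c : ℝ} {p : ℕ}

theorem exists_prefix_and_not_concat {α : Type*} {P : List α → Prop} (hnil : P []) {l : List α}
    (hl : ¬P l) : ∃ a b r, l = a ++ b :: r ∧ P a ∧ ¬P (a ++ [b]) := by
  induction l using List.reverseRecOn with
  | nil => exact absurd hnil hl
  | append_singleton l b ih =>
    by_cases hPl : P l
    · exact ⟨l, b, [], rfl, hPl, hl⟩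
    · obtain ⟨a, b', r, rfl, ha, hb'⟩ := ih hPl
      exact ⟨a, b', r ++ [b], by simp, ha, hb'⟩

-- A bucket of deviation at most `t` which the next point would push above `t` uses up, together
-- with that point, at least `t` of the budget `N * t`. The point becomes a bucket of its own.
theorem exists_buckets (ht : 0 ≤ t) (N : ℕ) (l : List ℝ)
    (hN : 2 * (l.map fun x => |x - c|).sum ≤ N * t) :
    ∃ Bs : List (List ℝ), Bs.flatten = l ∧ (∀ B ∈ Bs, deviation B ≤ t) ∧
      Bs.length ≤ 2 * N + 1 := by
  have hdev_le (m : List ℝ) : deviation m ≤ 2 * (m.map fun x => |x - c|).sum := by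
    simpa using deviation_le m c
  induction N generalizing l with
  | zero =>
    have hl : deviation l ≤ t := by
      rw [Nat.cast_zero, zero_mul] at hN
      exact (hdev_le l).trans (hN.trans ht)
    exact ⟨[l], by simp, by simpa using hl, by simp⟩
  | succ N ih =>
    by_cases hl : deviation l ≤ t
    · exact ⟨[l], by simp, by simpa using hl, by simp⟩
    obtain ⟨a, b, r, rfl, ha, hab⟩ :=
      exists_prefix_and_not_concat (P := fun m : List ℝ => deviation m ≤ t)
        (deviation_zero.trans_le ht) hl
    have hrest : 2 * (r.map fun x => |x - c|).sum ≤ N * t := by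
      have hprefix := (not_le.mp hab).trans_le (hdev_le (a ++ [b]))
      push_cast at hN
      simp only [List.map_append, List.map_cons, List.map_nil, List.sum_append, List.sum_cons,
        List.sum_nil] at hN hprefix
      linarith
    obtain ⟨Bs, rfl, hdev, hlength⟩ := ih r hrest
    refine ⟨a :: [b] :: Bs, by simp, ?_, by grind⟩
    simpa [deviation_singleton] using ⟨ha, ht, hdev⟩

theorem middle_mem_Icc {As Cs : List (List ℝ)}
    (hsorted : (As ++ M :: Cs).flatten.Pairwise (· ≤ ·))
    (hM : M ≠ [] → As.flatten.length = p ∧ Cs.flatten.length = p) {y τ : ℝ}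
    (hτ : (coarsen (As ++ M :: Cs)).countP (fun x => τ < |x - y|) < p) :
    ∀ x ∈ M, x ∈ Set.Icc (y - τ) (y + τ) := by
  intro x hx
  obtain ⟨hA, hC⟩ := hM (List.ne_nil_of_mem hx)
  rw [List.flatten_append, List.flatten_cons, List.pairwise_append, List.pairwise_append] at hsorted
  obtain ⟨-, ⟨-, -, hMC⟩, hAM⟩ := hsorted
  rw [coarsen_append, coarsen_cons, countP_add, countP_add] at hτ
  refine ⟨not_lt.mp fun hlt => ?_, not_lt.mp fun hlt => ?_⟩
  · have hcount := length_flatten_le_countP_coarsen (Bs := As) (q := fun z => τ < |z - y|)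
      (convex_Iio (y - τ)) (fun z hz => lt_abs.mpr <| .inr <| by linarith [Set.mem_Iio.mp hz])
      fun z hz => (hAM z hz x (List.mem_append_left _ hx)).trans_lt hlt
    omega
  · have hcount := length_flatten_le_countP_coarsen (Bs := Cs) (q := fun z => τ < |z - y|)
      (convex_Ioi (y + τ)) (fun z hz => lt_abs.mpr <| .inl <| by linarith [Set.mem_Ioi.mp hz])
      fun z hz => hlt.trans_le (hMC x hx z hz)
    omega

theorem cost1_coarsen_le {Bs : List (List ℝ)} (hp₁ : 1 ≤ p) (hp : p ≤ Bs.flatten.length) (y : ℝ) :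
    cost1 p (coarsen Bs) y ≤ cost1 p Bs.flatten y := by
  simpa using cost1_le_cost1_add (X := Bs.flatten) (t := 0) hp₁ hp (card_coarsen Bs)
    (sum_coarsen Bs) fun τ _ => by simp only [add_zero, excess_coarsen_le, and_self]

theorem cost1_flatten_le_cost1_coarsen_add {As Cs : List (List ℝ)}
    (hsorted : (As ++ M :: Cs).flatten.Pairwise (· ≤ ·))
    (hM : M ≠ [] → As.flatten.length = p ∧ Cs.flatten.length = p) (ht : 0 ≤ t)
    (hAs : ∀ B ∈ As, deviation B ≤ t) (hCs : ∀ B ∈ Cs, deviation B ≤ t) (hp₁ : 1 ≤ p)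
    (hp : p ≤ (As ++ M :: Cs).flatten.length) (y : ℝ) :
    cost1 p (As ++ M :: Cs).flatten y ≤ cost1 p (coarsen (As ++ M :: Cs)) y + 2 * t := by
  have hexcess {c : ℝ} (hc : excess M c ≤ excess (concentrate M) c) :
      excess (As ++ M :: Cs).flatten c ≤ excess (coarsen (As ++ M :: Cs)) c + t := by
    have hdev {B : List ℝ} (hB : deviation B ≤ t) : excess B c ≤ excess (concentrate B) c + t :=
      (excess_le_excess_concentrate_add_deviation B c).trans (by gcongr)
    refine excess_flatten_le_excess_coarsen_add hsorted ht ?_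
    rw [List.forall_mem_append, List.forall_mem_cons]
    exact ⟨fun B hB => hdev (hAs B hB), by linarith, fun B hB => hdev (hCs B hB)⟩
  refine cost1_le_cost1_add hp₁ (by simpa using hp) (by simp) (by simp) fun τ hτ => ?_
  have hmiddle := middle_mem_Icc hsorted hM hτ
  constructor
  · refine hexcess ?_
    rw [excess_eq_zero (s := (M : Multiset ℝ)) fun x hx => (hmiddle x hx).2]
    exact excess_nonneg _ _
  · refine hexcess ?_
    rw [excess_eq_sum_sub (s := (M : Multiset ℝ)) fun x hx => (hmiddle x hx).1]
    simpa using sum_sub_le_excess (concentrate M) (y - τ)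

-- For `card X ≤ 2 * p` the truncated subtraction `l.length - 2 * p` makes the middle part empty.
theorem exists_sorted_split (X : Multiset ℝ) (p : ℕ) :
    ∃ A M C : List ℝ, (A ++ (M ++ C) : List ℝ) = X ∧ (A ++ (M ++ C)).Pairwise (· ≤ ·) ∧
      A.length ≤ p ∧ C.length ≤ p ∧ (M ≠ [] → A.length = p ∧ C.length = p) := by
  set l := X.sort (· ≤ ·)
  refine ⟨l.take p, (l.drop p).take (l.length - 2 * p), (l.drop p).drop (l.length - 2 * p), ?_⟩
  rw [List.take_append_drop, List.take_append_drop]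
  refine ⟨sort_eq X _, pairwise_sort X _, ?_, ?_, fun hM => ?_⟩
  · exact List.length_take_le _ _
  · simp only [List.length_drop]
    omega
  · have hM := List.length_pos_of_ne_nil hM
    simp only [List.length_take, List.length_drop] at hM ⊢
    omega

theorem exists_buckets_of_le {X : Multiset ℝ} {ε : ℝ} (hε₀ : 0 < ε) (hε₁ : ε ≤ 1) (hp₁ : 1 ≤ p)
    (hp : p ≤ card X) (hlX : (l : Multiset ℝ) ≤ X) (hl : l.length ≤ p) :
    ∃ Bs : List (List ℝ), Bs.flatten = l ∧
      (∀ B ∈ Bs, deviation B ≤ ε * (⨅ y, cost1 p X y) / 2) ∧ (Bs.length : ℝ) ≤ 19 / ε := by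
  set opt := ⨅ y, cost1 p X y
  have hopt : 0 ≤ opt := Real.iInf_nonneg (cost1_nonneg hp₁ hp)
  have hdev : deviation l ≤ 2 * opt := by
    rw [← div_le_iff₀' two_pos]
    refine le_ciInf fun y => ?_
    linarith [deviation_le l y, sum_abs_sub_le_cost1 hp₁ hp hlX hl y]
  obtain ⟨Bs, hflatten, hBs, hlength⟩ := exists_buckets (t := ε * opt / 2) (c := mean l)
    (by positivity) ⌈8 / ε⌉₊ l <| calc
      2 * (l.map fun x => |x - mean l|).sum = 2 * deviation l := by simp [deviation]
      _ ≤ 8 / ε * (ε * opt / 2) := by field_simp; linarith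
      _ ≤ ⌈8 / ε⌉₊ * (ε * opt / 2) := by gcongr; exact Nat.le_ceil _
  refine ⟨Bs, hflatten, hBs, ?_⟩
  calc (Bs.length : ℝ) ≤ 2 * ⌈8 / ε⌉₊ + 1 := mod_cast hlength
    _ ≤ 2 * (8 / ε + 1) + 1 := by gcongr; exact (Nat.ceil_lt_add_one (by positivity)).le
    _ = 16 / ε + 3 := by ring
    _ ≤ 16 / ε + 3 / ε := by gcongr; exact le_div_self (by norm_num) hε₀ hε₁
    _ = 19 / ε := by ring

end Buckets

theorem exists_condensation {ε : ℝ} (hε₀ : 0 < ε) (hε₁ : ε ≤ 1) (X : Multiset ℝ) {p : ℕ}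
    (hp₁ : 1 ≤ p) (hp : p ≤ card X) :
    ∃ D : Multiset ℝ, (D.toFinset.card : ℝ) ≤ 39 / ε ∧ card D = card X ∧
      ∀ y, cost1 p D y ≤ cost1 p X y ∧
        cost1 p X y ≤ cost1 p D y + ε * ⨅ y', cost1 p X y' := by
  obtain ⟨A, M, C, hX, hsorted, hA, hC, hM⟩ := exists_sorted_split X p
  have hAX : (A : Multiset ℝ) ≤ X := hX ▸ coe_le.mpr (List.sublist_append_left _ _).subperm
  have hCX : (C : Multiset ℝ) ≤ X := hX ▸ coe_le.mpr
    ((List.sublist_append_right M C).trans (List.sublist_append_right A _)).subperm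
  obtain ⟨As, rfl, hAs, hAs_length⟩ := exists_buckets_of_le hε₀ hε₁ hp₁ hp hAX hA
  obtain ⟨Cs, rfl, hCs, hCs_length⟩ := exists_buckets_of_le hε₀ hε₁ hp₁ hp hCX hC
  rw [← List.flatten_cons, ← List.flatten_append] at hX hsorted
  subst hX
  have hopt := Real.iInf_nonneg (cost1_nonneg hp₁ hp)
  refine ⟨coarsen (As ++ M :: Cs), ?_, card_coarsen _, fun y => ⟨cost1_coarsen_le hp₁ hp y, ?_⟩⟩
  · calc ((coarsen (As ++ M :: Cs)).toFinset.card : ℝ) ≤ (As ++ M :: Cs).length :=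
          mod_cast card_toFinset_coarsen_le _
      _ = As.length + Cs.length + 1 := by
          rw [List.length_append, List.length_cons]
          push_cast
          ring
      _ ≤ 19 / ε + 19 / ε + 1 / ε := by gcongr; exact le_div_self zero_le_one hε₀ hε₁
      _ = 39 / ε := by ring
  · have hcost := cost1_flatten_le_cost1_coarsen_add hsorted hM (by positivity) hAs hCs hp₁ hp y
    linarith

theorem stmt_11_general {ε : ℝ} (hε₀ : 0 < ε) (hε₁ : ε ≤ 1) (X : Multiset ℝ) {p : ℕ}
    (hp₁ : 1 ≤ p) (hp : p ≤ card X) :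
    ∃ D : Multiset ℝ, (D.toFinset.card : ℝ) ≤ 39 / ε ∧ card D = card X ∧
      ∀ y, |cost1 p D y - cost1 p X y| ≤ ε * (⨅ y', cost1 p X y') ∧
        cost1 p D y ∈ Set.Icc ((1 - ε) * cost1 p X y) ((1 + ε) * cost1 p X y) := by
  obtain ⟨D, hdistinct, hcard, hcost⟩ := exists_condensation hε₀ hε₁ X hp₁ hp
  refine ⟨D, hdistinct, hcard, fun y => ?_⟩
  obtain ⟨hle, hge⟩ := hcost y
  have hopt : 0 ≤ ⨅ y', cost1 p X y' := Real.iInf_nonneg (cost1_nonneg hp₁ hp)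
  have herror_nonneg : 0 ≤ ε * ⨅ y', cost1 p X y' := by positivity
  have herror_le : ε * (⨅ y', cost1 p X y') ≤ ε * cost1 p X y := by
    gcongr
    exact iInf_cost1_le hp₁ hp y
  exact ⟨abs_le.mpr ⟨by linarith, by linarith [herror_nonneg]⟩, by linarith,
    by linarith [herror_nonneg]⟩

theorem stmt_11 :
    ∃ K : ℝ, 0 < K ∧
      ∀ ε : ℝ, ε ∈ Set.Ioo (0 : ℝ) 1 →
      ∀ X : Finset ℝ, X.Nonempty →
      ∀ p : ℕ, 1 ≤ p → p ≤ X.card →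
      ∃ D : Multiset ℝ,
        (D.toFinset.card : ℝ) ≤ K / ε ∧
        Multiset.card D = X.card ∧
        ∀ y : ℝ,
          |cost1 p D y - cost1 p X.val y| ≤ ε * (⨅ y' : ℝ, cost1 p X.val y') ∧
          cost1 p D y ∈ Set.Icc ((1 - ε) * cost1 p X.val y) ((1 + ε) * cost1 p X.val y) := by
  exact ⟨39, by norm_num, fun _ hε X _ _ hp₁ hp => stmt_11_general hε.1 hε.2.le X.val hp₁ hp⟩
end

section
/- For every d ∈ ℤ₊ there is a constant K_d > 0 such that the following holds. Given k ∈ ℤ₊, ε ∈ (0,1), and a finite set X ⊂ ℝ^d of n ≥ 2 points, there exists a finite multiset D of points in ℝ^d (points with positive integer multiplicities) whose number of distinct points is at most K_d·k²·(log n)²/ε^{d+1}, such that for every set C ⊂ ℝ^d of k centers and every nonincreasing weight vector v ∈ ℝ₊^n: cost_v(D,C) ∈ [(1−ε)·cost_v(X,C), (1+ε)·cost_v(X,C)]. -/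
attribute [local instance] Classical.decEq

/-- The list of distances from the points of the multiset `s` (with multiplicity) to the
nearest center of `C`, sorted in nonincreasing order. -/
noncomputable def sortedDistsDesc (d : ℕ) (s : Multiset (EuclideanSpace ℝ (Fin d)))
    (C : Finset (EuclideanSpace ℝ (Fin d))) : List ℝ :=
  ((s.map fun x => Metric.infDist x (C : Set (EuclideanSpace ℝ (Fin d)))).sort (· ≤ ·)).reverse

/-- The Ordered k-Median objective for a weight vector `v ∈ ℝ^n` applied to a multiset of
total multiplicity `n`: the `i`-th weight multiplies the `i`-th largest distance. -/
noncomputable def costV (d n : ℕ) (v : Fin n → ℝ) (s : Multiset (EuclideanSpace ℝ (Fin d)))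
    (C : Finset (EuclideanSpace ℝ (Fin d))) : ℝ :=
  ∑ i : Fin n, v i * (sortedDistsDesc d s C).getD i 0

/-!
By Abel summation, a nonincreasing weight vector compares two nonincreasing sequences as soon as
all their partial sums are compared, so it suffices to preserve, for every `p`, the sum of the `p`
largest distances (the `p`-centrum cost). A factor `2` in `p` changes that cost by at most a factor
`2`, hence the union `S` of near-optimal centers for the dyadic `p ≤ n` is within a factor `4` of
every `k`-center solution for all `p` at once. With `a` the average distance to `S`, round each
point `x` to a net whose mesh is proportional to `ε * (a + dist(x, S))`. The total displacement of
any `p` points is then `O(ε)` times the `p`-centrum cost of `S`. The net lives in `O(log n)` dyadic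
rings around each of the `O(k log n)` points of `S`, and by comparing volumes each ring contributes
`O(ε⁻¹ ^ d)` points.
-/

section LargestElements

/-- The `i`-th largest element of `s`, counted with multiplicity and starting from `i = 0`. It is
`0` for `i ≥ card s`, as in `costV`. -/
noncomputable def nthLargest (s : Multiset ℝ) (i : ℕ) : ℝ :=
  (s.sort (· ≤ ·)).reverse.getD i 0

/-- The sum of the `p` largest elements of `s`; for `p > card s` this is the sum of all of `s`. -/
noncomputable def topSum (s : Multiset ℝ) (p : ℕ) : ℝ :=
  ∑ i ∈ Finset.range p, nthLargest s i

variable {s : Multiset ℝ}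

lemma exists_nthLargest_eq {x : ℝ} (hx : x ∈ s) : ∃ i, nthLargest s i = x := by
  have hx' : x ∈ (s.sort (· ≤ ·)).reverse := by simpa using hx
  obtain ⟨i, hi, rfl⟩ := List.getElem_of_mem hx'
  exact ⟨i, List.getD_eq_getElem _ _ hi⟩

lemma nthLargest_mem {i : ℕ} (hi : i < s.card) : nthLargest s i ∈ s := by
  have hi' : i < (s.sort (· ≤ ·)).reverse.length := by simpa using hi
  have hmem := List.getElem_mem hi'
  rw [← List.getD_eq_getElem _ 0 hi'] at hmem
  simpa [nthLargest] using hmem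

lemma nthLargest_eq_zero {i : ℕ} (hi : s.card ≤ i) : nthLargest s i = 0 :=
  List.getD_eq_default _ _ (by simpa using hi)

lemma nthLargest_nonneg (hs : ∀ x ∈ s, 0 ≤ x) (i : ℕ) : 0 ≤ nthLargest s i := by
  rcases lt_or_ge i s.card with hi | hi
  · exact hs _ (nthLargest_mem hi)
  · exact (nthLargest_eq_zero hi).ge

lemma nthLargest_antitone (hs : ∀ x ∈ s, 0 ≤ x) : Antitone (nthLargest s) := by
  intro i j hij
  rcases lt_or_ge j s.card with hj | hj
  · have hj' : j < (s.sort (· ≤ ·)).reverse.length := by simpa using hj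
    have hsorted : (s.sort (· ≤ ·)).reverse.Pairwise (· ≥ ·) :=
      List.pairwise_reverse.mpr (Multiset.pairwise_sort s (· ≤ ·))
    rw [nthLargest, nthLargest, List.getD_eq_getElem _ _ hj',
      List.getD_eq_getElem _ _ (hij.trans_lt hj')]
    exact hsorted.rel_get_of_le hij
  · exact (nthLargest_eq_zero hj).trans_le (nthLargest_nonneg hs i)

lemma sum_range_card_nthLargest (s : Multiset ℝ) (φ : ℝ → ℝ) :
    ∑ i ∈ Finset.range s.card, φ (nthLargest s i) = (s.map φ).sum := by
  have hcoe : (((s.sort (· ≤ ·)).reverse : List ℝ) : Multiset ℝ) = s := by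
    rw [Multiset.coe_reverse, Multiset.sort_eq]
  unfold nthLargest
  generalize (s.sort (· ≤ ·)).reverse = l at hcoe ⊢
  subst hcoe
  rw [Multiset.coe_card, Multiset.map_coe, Multiset.sum_coe, Finset.sum_range,
    ← Fin.sum_univ_fun_getElem]
  exact Finset.sum_congr rfl fun i _ => by rw [List.getD_eq_getElem _ _ i.isLt]

lemma sum_range_nthLargest {n : ℕ} (hn : s.card ≤ n) {φ : ℝ → ℝ} (hφ : φ 0 = 0) :
    ∑ i ∈ Finset.range n, φ (nthLargest s i) = (s.map φ).sum := by
  rw [← sum_range_card_nthLargest]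
  refine (Finset.sum_subset (Finset.range_mono hn) fun i _ hi => ?_).symm
  rw [nthLargest_eq_zero (by simpa using hi), hφ]

lemma topSum_nonneg (hs : ∀ x ∈ s, 0 ≤ x) (p : ℕ) : 0 ≤ topSum s p :=
  Finset.sum_nonneg fun i _ => nthLargest_nonneg hs i

lemma topSum_mono (hs : ∀ x ∈ s, 0 ≤ x) : Monotone (topSum s) := fun _ _ hpq =>
  Finset.sum_le_sum_of_subset_of_nonneg (Finset.range_mono hpq) fun i _ _ => nthLargest_nonneg hs i

lemma le_topSum_one (hs : ∀ x ∈ s, 0 ≤ x) {x : ℝ} (hx : x ∈ s) : x ≤ topSum s 1 := by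
  obtain ⟨i, rfl⟩ := exists_nthLargest_eq hx
  simpa [topSum] using nthLargest_antitone hs (Nat.zero_le i)

/- `topSum s p` is the minimum over `t ≥ 0` of `p * t + ∑ x ∈ s, max (x - t) 0`, attained at
`t = nthLargest s p`; this duality turns comparisons of `topSum`s into pointwise ones. -/
lemma topSum_le_threshold (s : Multiset ℝ) (p : ℕ) {t : ℝ} (ht : 0 ≤ t) :
    topSum s p ≤ p * t + (s.map fun x => max (x - t) 0).sum := by
  rw [← sum_range_nthLargest (le_max_right p s.card) (by simpa using ht)]
  calc topSum s p
      ≤ ∑ i ∈ Finset.range p, (t + max (nthLargest s i - t) 0) :=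
        Finset.sum_le_sum fun i _ => by linarith [le_max_left (nthLargest s i - t) 0]
    _ = p * t + ∑ i ∈ Finset.range p, max (nthLargest s i - t) 0 := by
        simp [Finset.sum_add_distrib]
    _ ≤ p * t + ∑ i ∈ Finset.range (max p s.card), max (nthLargest s i - t) 0 := by
        have hrange := Finset.range_mono (le_max_left p s.card)
        linarith [Finset.sum_le_sum_of_subset_of_nonneg hrange
          fun i _ _ => le_max_right (nthLargest s i - t) 0]

lemma exists_topSum_eq_threshold (hs : ∀ x ∈ s, 0 ≤ x) (p : ℕ) :
    ∃ t, 0 ≤ t ∧ topSum s p = p * t + (s.map fun x => max (x - t) 0).sum := by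
  set t := nthLargest s p
  have ht : 0 ≤ t := nthLargest_nonneg hs p
  refine ⟨t, ht, ?_⟩
  rw [← sum_range_nthLargest (le_max_right p s.card) (by simpa using ht)]
  calc topSum s p
      = ∑ i ∈ Finset.range p, (t + max (nthLargest s i - t) 0) := by
        refine Finset.sum_congr rfl fun i hi => ?_
        have hti : t ≤ nthLargest s i := nthLargest_antitone hs (Finset.mem_range.mp hi).le
        rw [max_eq_left (sub_nonneg.mpr hti), add_sub_cancel]
    _ = p * t + ∑ i ∈ Finset.range p, max (nthLargest s i - t) 0 := by
        simp [Finset.sum_add_distrib]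
    _ = p * t + ∑ i ∈ Finset.range (max p s.card), max (nthLargest s i - t) 0 := by
        congr 1
        refine Finset.sum_subset (Finset.range_mono (le_max_left _ _)) fun i _ hi => ?_
        have hit : nthLargest s i ≤ t := nthLargest_antitone hs (by simpa using hi)
        exact max_eq_right (sub_nonpos.mpr hit)

lemma topSum_map_le_add {E : Type*} {X : Multiset E} {f g h : E → ℝ} (hg : ∀ x ∈ X, 0 ≤ g x)
    (hh : ∀ x ∈ X, 0 ≤ h x) (hf : ∀ x ∈ X, f x ≤ g x + h x) (p : ℕ) :
    topSum (X.map f) p ≤ topSum (X.map g) p + topSum (X.map h) p := by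
  obtain ⟨t, ht, hgt⟩ := exists_topSum_eq_threshold (s := X.map g) (by simpa using hg) p
  obtain ⟨u, hu, hhu⟩ := exists_topSum_eq_threshold (s := X.map h) (by simpa using hh) p
  have hftu := topSum_le_threshold (X.map f) p (add_nonneg ht hu)
  simp only [Multiset.map_map, Function.comp_def] at hgt hhu hftu
  have hexcess : (X.map fun x => max (f x - (t + u)) 0).sum ≤
      (X.map fun x => max (g x - t) 0).sum + (X.map fun x => max (h x - u) 0).sum := by
    rw [← Multiset.sum_map_add]
    refine Multiset.sum_map_le_sum_map _ _ fun x hx => max_le ?_ (by positivity)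
    linarith [hf x hx, le_max_left (g x - t) 0, le_max_left (h x - u) 0]
  rw [hgt, hhu]
  linarith

lemma topSum_map_le_affine {E : Type*} {X : Multiset E} {f h : E → ℝ} {α β : ℝ}
    (hh : ∀ x ∈ X, 0 ≤ h x) (hα : 0 ≤ α) (hβ : 0 ≤ β) (hf : ∀ x ∈ X, f x ≤ α + β * h x) (p : ℕ) :
    topSum (X.map f) p ≤ p * α + β * topSum (X.map h) p := by
  obtain ⟨u, hu, hhu⟩ := exists_topSum_eq_threshold (s := X.map h) (by simpa using hh) p
  have hfu := topSum_le_threshold (X.map f) p (t := α + β * u) (by positivity)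
  simp only [Multiset.map_map, Function.comp_def] at hhu hfu
  have hexcess : (X.map fun x => max (f x - (α + β * u)) 0).sum ≤
      β * (X.map fun x => max (h x - u) 0).sum := by
    rw [← Multiset.sum_map_mul_left]
    refine Multiset.sum_map_le_sum_map _ _ fun x hx => max_le ?_ (by positivity)
    linarith [hf x hx, mul_le_mul_of_nonneg_left (le_max_left (h x - u) 0) hβ]
  rw [hhu]
  linarith

lemma mul_topSum_le_mul_topSum (hs : ∀ x ∈ s, 0 ≤ x) {p q : ℕ} (hqp : q ≤ p) :
    q * topSum s p ≤ p * topSum s q := by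
  have hq : q * nthLargest s q ≤ topSum s q := by
    simpa [topSum] using Finset.card_nsmul_le_sum (Finset.range q) (nthLargest s) _ fun i hi =>
      nthLargest_antitone hs (Finset.mem_range.mp hi).le
  induction p, hqp using Nat.le_induction with
  | base => exact le_rfl
  | succ p hqp ih =>
    have hp : q * nthLargest s p ≤ q * nthLargest s q := by
      gcongr
      exact nthLargest_antitone hs hqp
    calc q * topSum s (p + 1) = q * topSum s p + q * nthLargest s p := by
          rw [topSum, Finset.sum_range_succ, mul_add, topSum]
      _ ≤ p * topSum s q + topSum s q := by linarith
      _ = (p + 1 : ℕ) * topSum s q := by push_cast; ring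

lemma topSum_le_two_mul_topSum_pow_log (hs : ∀ x ∈ s, 0 ≤ x) {p : ℕ} (hp : p ≠ 0) :
    topSum s p ≤ 2 * topSum s (2 ^ Nat.log 2 p) := by
  set q := 2 ^ Nat.log 2 p with hq
  have hqp : q ≤ p := Nat.pow_log_le_self 2 hp
  have hpq : (p : ℝ) ≤ q * 2 := by
    have := Nat.lt_pow_succ_log_self one_lt_two p
    rw [pow_succ, ← hq] at this
    exact_mod_cast this.le
  have hq0 : (0 : ℝ) < q := by positivity
  refine le_of_mul_le_mul_left ?_ hq0
  calc q * topSum s p ≤ p * topSum s q := mul_topSum_le_mul_topSum hs hqp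
    _ ≤ q * 2 * topSum s q := by gcongr; exact topSum_nonneg hs q
    _ = q * (2 * topSum s q) := mul_assoc _ _ _

end LargestElements

section AbelSummation

lemma mul_sum_le_sum_mul_of_antitone {n : ℕ} {v : Fin n → ℝ} (hv : Antitone v) {c : ℕ → ℝ}
    (hc : ∀ p ≤ n, 0 ≤ ∑ i ∈ Finset.range p, c i) {x : ℝ} (hx : ∀ i, x ≤ v i) :
    x * ∑ i ∈ Finset.range n, c i ≤ ∑ i : Fin n, v i * c i := by
  induction n generalizing x with
  | zero => simp
  | succ n ih =>
    have htruncated := ih (v := fun i => v i.castSucc) (x := v (Fin.last n))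
      (fun i j hij => hv (Fin.castSucc_le_castSucc_iff.mpr hij)) (fun p hp => hc p (by lia))
      (fun i => hv (Fin.le_last _))
    calc x * ∑ i ∈ Finset.range (n + 1), c i
        ≤ v (Fin.last n) * ∑ i ∈ Finset.range (n + 1), c i :=
          mul_le_mul_of_nonneg_right (hx _) (hc _ le_rfl)
      _ = v (Fin.last n) * ∑ i ∈ Finset.range n, c i + v (Fin.last n) * c n := by
          rw [Finset.sum_range_succ, mul_add]
      _ ≤ ∑ i : Fin (n + 1), v i * c i := by
          rw [Fin.sum_univ_castSucc]
          simpa using htruncated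

lemma sum_mul_le_sum_mul_of_sum_range_le {n : ℕ} {v : Fin n → ℝ} (hv0 : ∀ i, 0 ≤ v i)
    (hv : Antitone v) {a b : ℕ → ℝ}
    (hab : ∀ p ≤ n, ∑ i ∈ Finset.range p, a i ≤ ∑ i ∈ Finset.range p, b i) :
    ∑ i : Fin n, v i * a i ≤ ∑ i : Fin n, v i * b i := by
  have hsub := mul_sum_le_sum_mul_of_antitone hv (c := fun i => b i - a i)
    (fun p hp => by simpa using hab p hp) hv0
  simpa [mul_sub] using hsub

end AbelSummation

section CentrumCost

open Metric

variable {E : Type*} [PseudoMetricSpace E]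

/-- The `p`-centrum cost of the center set `C`: the sum of the `p` largest distances from the points
of `X` to `C`. -/
noncomputable def centrumCost (X : Multiset E) (C : Finset E) (p : ℕ) : ℝ :=
  topSum (X.map fun x => infDist x C) p

lemma nonneg_of_mem_map_infDist {X : Multiset E} {C : Set E} :
    ∀ t ∈ X.map fun x => infDist x C, 0 ≤ t := by
  simp [infDist_nonneg]

lemma centrumCost_nonneg (X : Multiset E) (C : Finset E) (p : ℕ) : 0 ≤ centrumCost X C p :=
  topSum_nonneg nonneg_of_mem_map_infDist p

lemma centrumCost_mono (X : Multiset E) (C : Finset E) : Monotone (centrumCost X C) :=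
  topSum_mono nonneg_of_mem_map_infDist

lemma infDist_le_centrumCost {X : Multiset E} {x : E} (hx : x ∈ X) (C : Finset E) {p : ℕ}
    (hp : 1 ≤ p) : infDist x C ≤ centrumCost X C p :=
  (le_topSum_one nonneg_of_mem_map_infDist (Multiset.mem_map_of_mem _ hx)).trans
    (centrumCost_mono X C hp)

lemma centrumCost_le_mul_of_infDist_le {X : Multiset E} {C C' : Finset E} {b : ℝ} (hb : 0 ≤ b)
    (h : ∀ x ∈ X, infDist x C ≤ b * infDist x C') (p : ℕ) :
    centrumCost X C p ≤ b * centrumCost X C' p := by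
  simpa [centrumCost] using topSum_map_le_affine (fun _ _ => infDist_nonneg) le_rfl hb
    (fun x hx => (h x hx).trans_eq (zero_add _).symm) p

lemma centrumCost_anti {X : Multiset E} {C C' : Finset E} (hC : C.Nonempty) (hCC' : C ⊆ C')
    (p : ℕ) : centrumCost X C' p ≤ centrumCost X C p := by
  simpa using centrumCost_le_mul_of_infDist_le (X := X) zero_le_one (fun x _ => by
    simpa using infDist_le_infDist_of_subset (x := x) (Finset.coe_subset.mpr hCC') hC) p

lemma abs_centrumCost_map_sub_le (X : Multiset E) (m : E → E) (C : Finset E) (p : ℕ) :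
    |centrumCost (X.map m) C p - centrumCost X C p| ≤ topSum (X.map fun x => dist x (m x)) p := by
  have hmap : centrumCost (X.map m) C p = topSum (X.map fun x => infDist (m x) C) p := by
    simp only [centrumCost, Multiset.map_map, Function.comp_def]
  rw [hmap, abs_sub_le_iff, sub_le_iff_le_add', sub_le_iff_le_add']
  constructor <;>
    refine topSum_map_le_add (fun _ _ => infDist_nonneg) (fun _ _ => dist_nonneg)
      (fun x _ => ?_) p
  · rw [dist_comm]
    exact infDist_le_infDist_add_dist
  · exact infDist_le_infDist_add_dist

lemma mul_centrumCost_le_mul_centrumCost (X : Multiset E) (C : Finset E) {p q : ℕ} (hqp : q ≤ p) :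
    q * centrumCost X C p ≤ p * centrumCost X C q :=
  mul_topSum_le_mul_topSum nonneg_of_mem_map_infDist hqp

end CentrumCost

section SimultaneousApproximation

open Metric

variable {E : Type*} [PseudoMetricSpace E]

lemma exists_subset_infDist_le_two_mul {P C : Finset E} (hP : P.Nonempty) (hC : C.Nonempty) :
    ∃ C' ⊆ P, C'.Nonempty ∧ C'.card ≤ C.card ∧
      ∀ x ∈ P, infDist x (C' : Set E) ≤ 2 * infDist x (C : Set E) := by
  choose π hπP hπmin using fun c => Finset.exists_min_image P (dist · c) hP
  refine ⟨C.image π, Finset.image_subset_iff.mpr fun c _ => hπP c, hC.image π,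
    Finset.card_image_le, fun x hx => ?_⟩
  obtain ⟨c, hcC, hxc⟩ := C.finite_toSet.isCompact.exists_infDist_eq_dist hC x
  calc infDist x (C.image π : Finset E)
      ≤ dist x (π c) := infDist_le_dist_of_mem (Finset.mem_image_of_mem π hcC)
    _ ≤ dist x c + dist (π c) c := dist_triangle_right _ _ _
    _ ≤ 2 * infDist x C := by linarith [hπmin c x hx]

variable {X : Multiset E} {k : ℕ}

lemma exists_centrumCost_le_two_mul (hX : X ≠ 0) (hk : 1 ≤ k) (p : ℕ) :
    ∃ A : Finset E, A.Nonempty ∧ A.card ≤ k ∧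
      ∀ C : Finset E, C.Nonempty → C.card ≤ k → centrumCost X A p ≤ 2 * centrumCost X C p := by
  obtain ⟨x₀, hx₀⟩ := Multiset.exists_mem_of_ne_zero hX
  obtain ⟨A, hA, hAmin⟩ := Finset.exists_min_image
    (X.toFinset.powerset.filter fun B => B.Nonempty ∧ B.card ≤ k) (centrumCost X · p)
    ⟨{x₀}, by simp [hx₀, hk]⟩
  simp only [Finset.mem_filter, Finset.mem_powerset] at hA hAmin
  refine ⟨A, hA.2.1, hA.2.2, fun C hC hCk => ?_⟩
  obtain ⟨C', hC'X, hC', hC'C, hdist⟩ := exists_subset_infDist_le_two_mul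
    (P := X.toFinset) ⟨x₀, by simpa using hx₀⟩ hC
  calc centrumCost X A p ≤ centrumCost X C' p := hAmin C' ⟨hC'X, hC', hC'C.trans hCk⟩
    _ ≤ 2 * centrumCost X C p := centrumCost_le_mul_of_infDist_le zero_le_two
        (fun x hx => hdist x (by simpa using hx)) p

lemma exists_forall_centrumCost_le_four_mul (hX : X ≠ 0) (hk : 1 ≤ k) :
    ∃ S : Finset E, S.Nonempty ∧ S.card ≤ (Nat.log 2 X.card + 1) * k ∧
      ∀ p ≤ X.card, ∀ C : Finset E, C.Nonempty → C.card ≤ k →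
        centrumCost X S p ≤ 4 * centrumCost X C p := by
  choose A hA hAk hAopt using exists_centrumCost_le_two_mul hX hk
  set scales := Finset.range (Nat.log 2 X.card + 1)
  refine ⟨scales.biUnion fun j => A (2 ^ j), ?_, ?_, fun p hp C hC hCk => ?_⟩
  · exact Finset.biUnion_nonempty.mpr ⟨0, by simp [scales], hA _⟩
  · simpa [scales] using Finset.card_biUnion_le_card_mul scales (fun j => A (2 ^ j)) k
      fun j _ => hAk _
  rcases eq_or_ne p 0 with rfl | hp0
  · simp [centrumCost, topSum]
  set q := 2 ^ Nat.log 2 p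
  have hscale : Nat.log 2 p ∈ scales :=
    Finset.mem_range_succ_iff.mpr (Nat.log_mono_right hp)
  calc centrumCost X (scales.biUnion fun j => A (2 ^ j)) p
      ≤ centrumCost X (A q) p :=
        centrumCost_anti (hA q) (Finset.subset_biUnion_of_mem (fun j => A (2 ^ j)) hscale) p
    _ ≤ 2 * centrumCost X (A q) q :=
        topSum_le_two_mul_topSum_pow_log nonneg_of_mem_map_infDist hp0
    _ ≤ 2 * (2 * centrumCost X C q) := by gcongr; exact hAopt q C hC hCk
    _ ≤ 2 * (2 * centrumCost X C p) := by
        gcongr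
        exact centrumCost_mono X C (Nat.pow_log_le_self 2 hp0)
    _ = 4 * centrumCost X C p := by ring

end SimultaneousApproximation

section RingNet

open Metric

/-- Every closed ball of radius `r` in `E` is covered by at most `B` closed balls of radius `δ * r`:
the doubling condition at the single scale `δ`. -/
def HasBallCovers (E : Type*) [PseudoMetricSpace E] (δ B : ℝ) : Prop :=
  ∀ (c : E) (r : ℝ), 0 ≤ r →
    ∃ N : Finset E, (N.card : ℝ) ≤ B ∧ closedBall c r ⊆ ⋃ y ∈ N, closedBall y (δ * r)

lemma exists_le_two_pow_mul_le {a t : ℝ} (ha : 0 ≤ a) (ht : 0 ≤ t) {L : ℕ} (htL : t ≤ 2 ^ L * a) :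
    ∃ j ≤ L, t ≤ 2 ^ j * a ∧ 2 ^ j * a ≤ a + 2 * t := by
  induction L with
  | zero => exact ⟨0, le_rfl, htL, by linarith⟩
  | succ L ih =>
    rcases le_or_gt t (2 ^ L * a) with htL' | htL'
    · obtain ⟨j, hjL, hj⟩ := ih htL'
      exact ⟨j, hjL.trans L.le_succ, hj⟩
    · exact ⟨L + 1, le_rfl, htL, by rw [pow_succ]; linarith⟩

variable {E : Type*} [PseudoMetricSpace E] {δ B : ℝ}

lemma HasBallCovers.nonneg [Nonempty E] (hE : HasBallCovers E δ B) : 0 ≤ B := by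
  obtain ⟨N, hN, -⟩ := hE (Classical.arbitrary E) 0 le_rfl
  exact N.card.cast_nonneg.trans hN

lemma HasBallCovers.exists_ring_net (hE : HasBallCovers E δ B) (hδ : 0 ≤ δ) {S : Finset E}
    (hS : S.Nonempty) {a : ℝ} (ha : 0 ≤ a) (L : ℕ) :
    ∃ N : Finset E, (N.card : ℝ) ≤ S.card * (L + 1) * B ∧
      ∀ x, infDist x (S : Set E) ≤ 2 ^ L * a →
        ∃ y ∈ N, dist x y ≤ δ * a + 2 * δ * infDist x (S : Set E) := by
  choose N hNcard hNcover using fun (c : E) (j : ℕ) => hE c (2 ^ j * a) (by positivity)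
  set rings := S ×ˢ Finset.range (L + 1) with hrings
  refine ⟨rings.biUnion fun q => N q.1 q.2, ?_, fun x hx => ?_⟩
  · calc ((rings.biUnion fun q => N q.1 q.2).card : ℝ)
        ≤ ∑ q ∈ rings, ((N q.1 q.2).card : ℝ) := mod_cast Finset.card_biUnion_le
      _ ≤ ∑ _q ∈ rings, B := Finset.sum_le_sum fun q _ => hNcard q.1 q.2
      _ = S.card * (L + 1) * B := by simp [hrings]
  · obtain ⟨j, hjL, hxj, hja⟩ := exists_le_two_pow_mul_le ha infDist_nonneg hx
    obtain ⟨c, hcS, hxc⟩ := S.finite_toSet.isCompact.exists_infDist_eq_dist hS x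
    obtain ⟨y, hyN, hxy⟩ := Set.mem_iUnion₂.mp (hNcover c j (mem_closedBall.mpr (hxc ▸ hxj)))
    refine ⟨y, Finset.mem_biUnion.mpr ⟨(c, j), ?_, hyN⟩, ?_⟩
    · exact Finset.mk_mem_product hcS (Finset.mem_range_succ_iff.mpr hjL)
    · calc dist x y ≤ δ * (2 ^ j * a) := hxy
        _ ≤ δ * (a + 2 * infDist x (S : Set E)) := by gcongr
        _ = δ * a + 2 * δ * infDist x (S : Set E) := by ring

/- The scale `a` is the average distance to `S`; then `p * a ≤ centrumCost X S p`, and no point is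
farther than `n * a` from `S`, so that `log n` doublings of `a` reach all of `X`. -/
lemma HasBallCovers.exists_map_displacement_le (hE : HasBallCovers E δ B) (hδ : 0 ≤ δ)
    {X : Multiset E} (hX : X ≠ 0) {S : Finset E} (hS : S.Nonempty) :
    ∃ (m : E → E) (N : Finset E), (N.card : ℝ) ≤ S.card * (Nat.log 2 X.card + 2) * B ∧
      (∀ x ∈ X, m x ∈ N) ∧
      ∀ p ≤ X.card, topSum (X.map fun x => dist x (m x)) p ≤ 3 * δ * centrumCost X S p := by
  set n := X.card
  have hn : (0 : ℝ) < n := mod_cast Multiset.card_pos.mpr hX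
  set a := centrumCost X S n / n
  have ha : 0 ≤ a := div_nonneg (centrumCost_nonneg X S n) hn.le
  have hna : n * a = centrumCost X S n := mul_div_cancel₀ _ hn.ne'
  have hreach : ∀ x ∈ X, infDist x S ≤ 2 ^ (Nat.log 2 n + 1) * a := fun x hx =>
    calc infDist x S ≤ n * a :=
          (infDist_le_centrumCost hx S (mod_cast hn)).trans_eq hna.symm
      _ ≤ 2 ^ (Nat.log 2 n + 1) * a := by
          gcongr
          exact_mod_cast (Nat.lt_pow_succ_log_self one_lt_two n).le
  obtain ⟨N, hNcard, hN⟩ := hE.exists_ring_net hδ hS ha (Nat.log 2 n + 1)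
  have hround : ∀ x, ∃ y, x ∈ X → y ∈ N ∧ dist x y ≤ δ * a + 2 * δ * infDist x (S : Set E) := by
    intro x
    by_cases hx : x ∈ X
    · obtain ⟨y, hy⟩ := hN x (hreach x hx)
      exact ⟨y, fun _ => hy⟩
    · exact ⟨x, fun h => absurd h hx⟩
  choose m hm using hround
  refine ⟨m, N, hNcard.trans_eq (by push_cast; ring), fun x hx => (hm x hx).1, fun p hp => ?_⟩
  have hpa : p * a ≤ centrumCost X S p := by
    rw [mul_div_assoc', div_le_iff₀' hn]
    exact mul_centrumCost_le_mul_centrumCost X S hp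
  calc topSum (X.map fun x => dist x (m x)) p
      ≤ p * (δ * a) + 2 * δ * centrumCost X S p :=
        topSum_map_le_affine (fun _ _ => infDist_nonneg) (by positivity) (by positivity)
          (fun x hx => (hm x hx).2) p
    _ = δ * (p * a) + 2 * δ * centrumCost X S p := by ring
    _ ≤ δ * centrumCost X S p + 2 * δ * centrumCost X S p := by gcongr
    _ = 3 * δ * centrumCost X S p := by ring

theorem HasBallCovers.exists_centrumCost_coreset [DecidableEq E] (hE : HasBallCovers E δ B)
    (hδ : 0 ≤ δ) {X : Multiset E} (hX : X ≠ 0) {k : ℕ} (hk : 1 ≤ k) :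
    ∃ D : Multiset E, D.card = X.card ∧
      (D.toFinset.card : ℝ) ≤ (Nat.log 2 X.card + 1) * k * (Nat.log 2 X.card + 2) * B ∧
      ∀ C : Finset E, C.Nonempty → C.card ≤ k → ∀ p ≤ X.card,
        |centrumCost D C p - centrumCost X C p| ≤ 12 * δ * centrumCost X C p := by
  obtain ⟨S, hS, hScard, hSopt⟩ := exists_forall_centrumCost_le_four_mul hX hk
  obtain ⟨m, N, hNcard, hmN, hm⟩ := hE.exists_map_displacement_le hδ hX hS
  have : Nonempty E := hS.to_type
  have hB : 0 ≤ B := hE.nonneg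
  refine ⟨X.map m, X.card_map m, ?_, fun C hC hCk p hp => ?_⟩
  · have hsub : (X.map m).toFinset ⊆ N := by
      simpa [Finset.subset_iff] using hmN
    calc ((X.map m).toFinset.card : ℝ) ≤ N.card := mod_cast Finset.card_le_card hsub
      _ ≤ S.card * (Nat.log 2 X.card + 2) * B := hNcard
      _ ≤ (Nat.log 2 X.card + 1) * k * (Nat.log 2 X.card + 2) * B := by
          gcongr
          exact_mod_cast hScard
  · calc |centrumCost (X.map m) C p - centrumCost X C p|
        ≤ topSum (X.map fun x => dist x (m x)) p := abs_centrumCost_map_sub_le X m C p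
      _ ≤ 3 * δ * centrumCost X S p := hm p hp
      _ ≤ 3 * δ * (4 * centrumCost X C p) := by gcongr; exact hSopt p hp C hC hCk
      _ = 12 * δ * centrumCost X C p := by ring

end RingNet

section SeparatedNet

open Metric
open scoped NNReal

lemma packingNumber_closedBall_ne_top {E : Type*} [PseudoMetricSpace E] [ProperSpace E] (c : E)
    (r : ℝ) {ρ : ℝ≥0} (hρ : ρ ≠ 0) : packingNumber ρ (closedBall c r) ≠ ⊤ := by
  obtain ⟨N, -, hNfin, hNcover⟩ := exists_finite_isCover_of_isCompact (half_pos hρ.bot_lt).ne'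
    (isCompact_closedBall c r)
  have hpacking := packingNumber_two_mul_le_externalCoveringNumber (ρ / 2) (closedBall c r)
  rw [mul_div_cancel₀ ρ two_ne_zero] at hpacking
  exact (hpacking.trans_lt (hNcover.externalCoveringNumber_le_encard.trans_lt
    hNfin.encard_lt_top)).ne

lemma exists_finset_separated_cover_closedBall {E : Type*} [PseudoMetricSpace E] [ProperSpace E]
    (c : E) (r : ℝ) {ρ : ℝ} (hρ : 0 < ρ) :
    ∃ N : Finset E, (N : Set E) ⊆ closedBall c r ∧ (N : Set E).Pairwise (ρ ≤ dist · ·) ∧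
      closedBall c r ⊆ ⋃ y ∈ N, closedBall y ρ := by
  lift ρ to ℝ≥0 using hρ.le
  have hpacking := packingNumber_closedBall_ne_top c r (NNReal.coe_pos.mp hρ).ne'
  have hfinite : (maximalSeparatedSet ρ (closedBall c r)).Finite := by
    rwa [← Set.encard_ne_top_iff, encard_maximalSeparatedSet hpacking]
  refine ⟨hfinite.toFinset, ?_, fun x hx y hy hxy => ?_, ?_⟩
  · simpa using maximalSeparatedSet_subset
  · have hsep : (ρ : ENNReal) < edist x y :=
      isSeparated_maximalSeparatedSet (by simpa using hx) (by simpa using hy) hxy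
    rw [edist_nndist, ENNReal.coe_lt_coe] at hsep
    exact_mod_cast hsep.le
  · simpa using (isCover_maximalSeparatedSet hpacking).subset_iUnion_closedBall

end SeparatedNet

section FiniteDimensional

open Metric MeasureTheory Module

variable {E : Type*} [NormedAddCommGroup E] [NormedSpace ℝ E] [FiniteDimensional ℝ E]

lemma card_mul_pow_le_of_pairwise_dist {s : Finset E} {c : E} {r ρ : ℝ} (hr : 0 ≤ r) (hρ : 0 < ρ)
    (hs : (s : Set E) ⊆ closedBall c r) (hsep : (s : Set E).Pairwise (ρ ≤ dist · ·)) :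
    s.card * (ρ / 2) ^ finrank ℝ E ≤ (r + ρ / 2) ^ finrank ℝ E := by
  borelize E
  let μ : Measure E := Measure.addHaar
  have hdisj : (s : Set E).PairwiseDisjoint (ball · (ρ / 2)) := fun x hx y hy hxy =>
    ball_disjoint_ball (by simpa using hsep hx hy hxy)
  have hsub : ⋃ x ∈ s, ball x (ρ / 2) ⊆ ball c (r + ρ / 2) :=
    Set.iUnion₂_subset fun x hx => ball_subset_ball' (by linarith [mem_closedBall.mp (hs hx)])
  have hball (x : E) {t : ℝ} (ht : 0 < t) :
      μ.real (ball x t) = t ^ finrank ℝ E * μ.real (ball 0 1) := by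
    rw [measureReal_def, μ.addHaar_ball_of_pos x ht, ENNReal.toReal_mul,
      ENNReal.toReal_ofReal (by positivity), measureReal_def]
  have hunit : 0 < μ.real (ball (0 : E) 1) :=
    ENNReal.toReal_pos (measure_ball_pos μ 0 one_pos).ne' measure_ball_lt_top.ne
  refine le_of_mul_le_mul_right ?_ hunit
  calc s.card * (ρ / 2) ^ finrank ℝ E * μ.real (ball 0 1)
      = ∑ x ∈ s, μ.real (ball x (ρ / 2)) := by
        simp [hball _ (half_pos hρ), mul_assoc]
    _ = μ.real (⋃ x ∈ s, ball x (ρ / 2)) :=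
        (measureReal_biUnion_finset hdisj (fun _ _ => measurableSet_ball)
          fun _ _ => measure_ball_lt_top.ne).symm
    _ ≤ μ.real (ball c (r + ρ / 2)) := measureReal_mono hsub measure_ball_lt_top.ne
    _ = (r + ρ / 2) ^ finrank ℝ E * μ.real (ball 0 1) := hball c (by positivity)

theorem hasBallCovers_of_finiteDimensional {δ : ℝ} (hδ : 0 < δ) (hδ1 : δ ≤ 1) :
    HasBallCovers E δ ((3 / δ) ^ finrank ℝ E) := by
  intro c r hr
  rcases hr.eq_or_lt with rfl | hr
  · exact ⟨{c}, by simpa using one_le_pow₀ (by rw [le_div_iff₀ hδ]; linarith), by simp⟩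
  have hδr : 0 < δ * r := mul_pos hδ hr
  have := FiniteDimensional.proper_real E
  obtain ⟨N, hNball, hNsep, hNcover⟩ := exists_finset_separated_cover_closedBall c r hδr
  refine ⟨N, ?_, hNcover⟩
  have hvolume := card_mul_pow_le_of_pairwise_dist hr.le hδr hNball hNsep
  rw [← le_div_iff₀ (by positivity), ← div_pow] at hvolume
  refine hvolume.trans (pow_le_pow_left₀ (by positivity) ?_ _)
  rw [div_le_div_iff₀ (by positivity) hδ]
  nlinarith

end FiniteDimensional

section OrderedMedian

variable {d n : ℕ} {v : Fin n → ℝ} {C : Finset (EuclideanSpace ℝ (Fin d))}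

lemma mul_costV_le_mul_costV (hv0 : ∀ i, 0 ≤ v i) (hv : Antitone v)
    {X Y : Multiset (EuclideanSpace ℝ (Fin d))} {a b : ℝ}
    (hXY : ∀ p ≤ n, a * centrumCost X C p ≤ b * centrumCost Y C p) :
    a * costV d n v X C ≤ b * costV d n v Y C := by
  have hcost (c : ℝ) (Z : Multiset (EuclideanSpace ℝ (Fin d))) : c * costV d n v Z C =
      ∑ i : Fin n, v i * (c * nthLargest (Z.map fun x => Metric.infDist x C) i) := by
    simp only [costV, Finset.mul_sum, mul_left_comm c]
    rfl
  rw [hcost, hcost]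
  refine sum_mul_le_sum_mul_of_sum_range_le hv0 hv
    (a := fun i => a * nthLargest (X.map fun x => Metric.infDist x C) i)
    (b := fun i => b * nthLargest (Y.map fun x => Metric.infDist x C) i) fun p hp => ?_
  rw [← Finset.mul_sum, ← Finset.mul_sum]
  exact hXY p hp

lemma costV_mem_Icc_of_abs_centrumCost_sub_le (hv0 : ∀ i, 0 ≤ v i) (hv : Antitone v)
    {X D : Multiset (EuclideanSpace ℝ (Fin d))} {ε : ℝ}
    (hXD : ∀ p ≤ n, |centrumCost D C p - centrumCost X C p| ≤ ε * centrumCost X C p) :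
    costV d n v D C ∈ Set.Icc ((1 - ε) * costV d n v X C) ((1 + ε) * costV d n v X C) := by
  constructor
  · simpa using mul_costV_le_mul_costV hv0 hv (b := 1) fun p hp => by
      linarith [(abs_le.mp (hXD p hp)).1]
  · simpa using mul_costV_le_mul_costV hv0 hv (a := 1) fun p hp => by
      linarith [(abs_le.mp (hXD p hp)).2]

end OrderedMedian

lemma natLog_two_add_one_mul_add_two_le {n : ℕ} (hn : 2 ≤ n) :
    ((Nat.log 2 n : ℝ) + 1) * (Nat.log 2 n + 2) ≤ 15 * Real.log n ^ 2 := by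
  have hlog2 : 0.69 < Real.log 2 := by linarith [Real.log_two_gt_d9]
  have hlogn : Real.log 2 ≤ Real.log n := Real.log_le_log two_pos (mod_cast hn)
  have hfloor : Nat.log 2 n * Real.log 2 ≤ Real.log n := by
    rw [← le_div_iff₀ (Real.log_pos one_lt_two)]
    exact_mod_cast Real.natLog_le_logb n 2
  calc ((Nat.log 2 n : ℝ) + 1) * (Nat.log 2 n + 2)
      ≤ (3 * Real.log n) * (5 * Real.log n) := by gcongr <;> nlinarith
    _ = 15 * Real.log n ^ 2 := by ring

theorem stmt_13_general (d : ℕ) :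
    ∃ K : ℝ, 0 < K ∧
      ∀ k : ℕ, 1 ≤ k →
      ∀ ε : ℝ, ε ∈ Set.Ioo (0 : ℝ) 1 →
      ∀ (X : Multiset (EuclideanSpace ℝ (Fin d))) (n : ℕ), X.card = n → 2 ≤ n →
      ∃ D : Multiset (EuclideanSpace ℝ (Fin d)),
        Multiset.card D = n ∧
        (D.toFinset.card : ℝ) ≤ K * k * (Real.log n) ^ 2 / ε ^ d ∧
        ∀ C : Finset (EuclideanSpace ℝ (Fin d)), C.card ≤ k → C.Nonempty →
          ∀ v : Fin n → ℝ, (∀ i, 0 ≤ v i) → Antitone v →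
            costV d n v D C ∈
              Set.Icc ((1 - ε) * costV d n v X C) ((1 + ε) * costV d n v X C) := by
  refine ⟨15 * 36 ^ d, by positivity, ?_⟩
  rintro k hk ε ⟨hε0, hε1⟩ X n rfl hn
  have hcover : HasBallCovers (EuclideanSpace ℝ (Fin d)) (ε / 12) ((36 / ε) ^ d) := by
    have hcover := hasBallCovers_of_finiteDimensional (E := EuclideanSpace ℝ (Fin d))
      (δ := ε / 12) (by positivity) (by linarith)
    rwa [finrank_euclideanSpace_fin, show 3 / (ε / 12) = 36 / ε by field_simp; norm_num] at hcover
  have hX : X ≠ 0 := Multiset.card_pos.mp (by lia)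
  obtain ⟨D, hDX, hDcard, hD⟩ := hcover.exists_centrumCost_coreset (by positivity) hX hk
  refine ⟨D, hDX, hDcard.trans ?_, fun C hCk hC v hv0 hv =>
    costV_mem_Icc_of_abs_centrumCost_sub_le hv0 hv fun p hp => ?_⟩
  · calc ((Nat.log 2 X.card : ℝ) + 1) * k * (Nat.log 2 X.card + 2) * (36 / ε) ^ d
        = ((Nat.log 2 X.card : ℝ) + 1) * (Nat.log 2 X.card + 2) * (k * (36 / ε) ^ d) := by ring
      _ ≤ 15 * Real.log X.card ^ 2 * (k * (36 / ε) ^ d) := by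
          gcongr ?_ * _; exact natLog_two_add_one_mul_add_two_le hn
      _ = 15 * 36 ^ d * k * Real.log X.card ^ 2 / ε ^ d := by rw [div_pow]; ring
  · exact (hD C hC hCk p hp).trans_eq (by ring)

theorem stmt_13 (d : ℕ) (hd : 1 ≤ d) :
    ∃ K : ℝ, 0 < K ∧
      ∀ k : ℕ, 1 ≤ k →
      ∀ ε : ℝ, ε ∈ Set.Ioo (0 : ℝ) 1 →
      ∀ (X : Finset (EuclideanSpace ℝ (Fin d))) (n : ℕ), X.card = n → 2 ≤ n →
      ∃ D : Multiset (EuclideanSpace ℝ (Fin d)),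
        Multiset.card D = n ∧
        (D.toFinset.card : ℝ) ≤ K * k ^ 2 * (Real.log n) ^ 2 / ε ^ (d + 1) ∧
        ∀ C : Finset (EuclideanSpace ℝ (Fin d)), C.card = k → C.Nonempty →
          ∀ v : Fin n → ℝ, (∀ i, 0 ≤ v i) → Antitone v →
            costV d n v D C ∈
              Set.Icc ((1 - ε) * costV d n v X.val C) ((1 + ε) * costV d n v X.val C) := by
  obtain ⟨K, hK, hcoreset⟩ := stmt_13_general d
  refine ⟨K, hK, fun k hk ε hε X n hXn hn => ?_⟩
  obtain ⟨D, hDn, hDcard, hD⟩ := hcoreset k hk ε hε X.val n hXn hn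
  refine ⟨D, hDn, hDcard.trans ?_, fun C hCk => hD C hCk.le⟩
  have hk2 : (k : ℝ) ≤ k ^ 2 := mod_cast Nat.le_self_pow two_ne_zero k
  have hεpow : ε ^ (d + 1) ≤ ε ^ d := pow_le_pow_of_le_one hε.1.le hε.2.le d.le_succ
  have hε0 : 0 < ε := hε.1
  gcongr
end
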